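/- Let s > 2, let I ⊆ ℝ be an open interval containing 0, and let S be the kernel S(k,ℓ) = Λ(k,ℓ)/|kℓ(k+ℓ)|^{1/2} if kℓ(k+ℓ) ≠ 0 and 0 otherwise, with Λ(k,ℓ) = 2|k+ℓ|·|k|·|ℓ|/(|k+ℓ|+|k|+|ℓ|) for (k,ℓ)≠(0,0) and Λ(0,0)=0. Suppose f: I×ℝ → ℂ is measurable, f(τ,−k) = conj(f(τ,k)) for a.e. k and all τ ∈ I, the map τ ↦ f(τ,·) is continuous from I into L²(ℝ,(1+|k|^{2s})dk) with sup_{τ∈I} ∫_ℝ (1+|k|^{2s})|f(τ,k)|² dk < ∞, and for a.e. k ∈ ℝ and all τ ∈ I the Duhamel relation f(τ,k) = f(0,k) − i k ∫₀^τ ∫_ℝ S(k−ℓ,ℓ) f(σ,k−ℓ) f(σ,ℓ) dℓ dσ holds. Then the L² norm is conserved: ∫_ℝ |f(τ,k)|² dk = ∫_ℝ |f(0,k)|² dk for all τ ∈ I. -/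

import Mathlib

open MeasureTheory

/-- The kernel `Λ` of the surface-wave amplitude equation. -/
noncomputable def Lam (k l : ℝ) : ℝ :=
  if (k, l) = ((0 : ℝ), (0 : ℝ)) then 0
  else 2 * |k + l| * |k| * |l| / (|k + l| + |k| + |l|)

/-- The kernel `S` of the noncanonical form of the amplitude equation. -/
noncomputable def Sker (k l : ℝ) : ℝ :=
  if k * l * (k + l) ≠ 0 then Lam k l / Real.sqrt |k * l * (k + l)| else 0

lemma sq_real {h : ℝ → ℝ} {τ c : ℝ} (hh : IntervalIntegrable h volume 0 τ) :
    (∫ x in (0:ℝ)..τ, 2 * ((c + ∫ t in (0:ℝ)..x, h t) * h x))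
      = (c + ∫ t in (0:ℝ)..τ, h t) ^ 2 - c ^ 2 := by
  have hac0 := hh.absolutelyContinuousOnInterval_intervalIntegral (c := 0) (by simp)
  have hc : AbsolutelyContinuousOnInterval (fun _ : ℝ => c) 0 τ :=
    LipschitzOnWith.absolutelyContinuousOnInterval (K := 0)
      ((LipschitzWith.const c).lipschitzOnWith)
  have hac := hc.add hac0
  have key := hac.integral_deriv_mul_eq_sub hac
  simp only [Pi.add_apply, intervalIntegral.integral_same, add_zero] at key
  rw [sq, sq, ← key]
  apply intervalIntegral.integral_congr_ae
  filter_upwards [hh.ae_hasDerivAt_integral] with x hx hx3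
  have h1 := hx (Set.uIoc_subset_uIcc hx3) 0 (by simp)
  have h2 : HasDerivAt ((fun _ : ℝ => c) + fun x => ∫ t in (0:ℝ)..x, h t) (h x) x := by
    simpa using (hasDerivAt_const x c).add h1
  rw [h2.deriv]; ring

lemma sq_complex {h : ℝ → ℂ} {τ : ℝ} {c : ℂ} (hh : IntervalIntegrable h volume 0 τ) :
    (∫ x in (0:ℝ)..τ, 2 * ((starRingEnd ℂ) (c + ∫ t in (0:ℝ)..x, h t) * h x).re)
      = ‖c + ∫ t in (0:ℝ)..τ, h t‖ ^ 2 - ‖c‖ ^ 2 := by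
  have hre : IntervalIntegrable (fun t => (h t).re) volume 0 τ :=
    ⟨hh.1.re, hh.2.re⟩
  have him : IntervalIntegrable (fun t => (h t).im) volume 0 τ :=
    ⟨hh.1.im, hh.2.im⟩
  have sub : ∀ x ∈ Set.uIcc 0 τ, IntervalIntegrable h volume 0 x := fun x hx =>
    hh.mono_set (Set.uIcc_subset_uIcc (by simp) hx)
  have ire : ∀ x ∈ Set.uIcc 0 τ, (∫ t in (0:ℝ)..x, h t).re = ∫ t in (0:ℝ)..x, (h t).re := by
    intro x hx
    exact (Complex.reCLM.intervalIntegral_comp_comm (sub x hx)).symm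
  have iim : ∀ x ∈ Set.uIcc 0 τ, (∫ t in (0:ℝ)..x, h t).im = ∫ t in (0:ℝ)..x, (h t).im := by
    intro x hx
    exact (Complex.imCLM.intervalIntegral_comp_comm (sub x hx)).symm
  have r1 := sq_real (c := c.re) hre
  have r2 := sq_real (c := c.im) him
  have cont : ∀ (g : ℝ → ℝ) (d : ℝ), IntervalIntegrable g volume 0 τ →
      IntervalIntegrable (fun x => 2 * ((d + ∫ t in (0:ℝ)..x, g t) * g x)) volume 0 τ := by
    intro g d hg
    refine (hg.continuousOn_mul ?_).const_mul 2
    exact continuousOn_const.add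
      (hg.absolutelyContinuousOnInterval_intervalIntegral (c := 0) (by simp)).continuousOn
  have e : (∫ x in (0:ℝ)..τ, 2 * ((starRingEnd ℂ) (c + ∫ t in (0:ℝ)..x, h t) * h x).re)
      = ∫ x in (0:ℝ)..τ, (2 * ((c.re + ∫ t in (0:ℝ)..x, (h t).re) * (h x).re)
        + 2 * ((c.im + ∫ t in (0:ℝ)..x, (h t).im) * (h x).im)) := by
    apply intervalIntegral.integral_congr
    intro x hx
    simp only [Complex.mul_re, Complex.conj_re, Complex.conj_im, Complex.add_re, Complex.add_im]
    rw [ire x hx, iim x hx]; ring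
  rw [e, intervalIntegral.integral_add (cont _ _ hre) (cont _ _ him), r1, r2,
    ← ire τ (by simp), ← iim τ (by simp), ← Complex.normSq_eq_norm_sq, ← Complex.normSq_eq_norm_sq,
    Complex.normSq_apply, Complex.normSq_apply]
  simp only [Complex.add_re, Complex.add_im]; ring

lemma Sker_eq (k l : ℝ) :
    Sker k l = 2 * Real.sqrt (|k| * |l| * |k + l|) / (|k + l| + |k| + |l|) := by
  unfold Sker Lam
  rw [abs_mul, abs_mul]
  split_ifs with h1 h2
  · exfalso; simp only [Prod.mk.injEq] at h2; apply h1; simp [h2.1]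
  · have hp : 0 < |k| * |l| * |k + l| := by
      rw [← abs_mul, ← abs_mul]; exact abs_pos.mpr h1
    have hs := Real.sqrt_pos.mpr hp
    rw [div_div, mul_comm (|k + l| + |k| + |l|), ← div_div]
    congr 1
    rw [div_eq_iff hs.ne']
    linear_combination -2 * Real.mul_self_sqrt hp.le
  · have h0 : |k| * |l| * |k + l| = 0 := by
      rw [← abs_mul, ← abs_mul, abs_eq_zero]; exact not_not.mp h1
    rw [h0]; simp

lemma Sker_meas : Measurable (fun p : ℝ × ℝ => Sker (p.1 - p.2) p.2) := by
  simp only [Sker_eq]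
  fun_prop

lemma Sker_sub (k l : ℝ) : Sker (k - l) l =
    2 * Real.sqrt (|k - l| * |l| * |k|) / (|k| + |k - l| + |l|) := by
  rw [Sker_eq]; simp

lemma Sker_swap (k l : ℝ) : Sker (l - k) k = Sker (k - l) l := by
  rw [Sker_sub, Sker_sub, abs_sub_comm l k]
  congr 1
  · congr 2; ring
  · ring

lemma Sker_refl (k l : ℝ) : Sker (k - (k - l)) (k - l) = Sker (k - l) l := by
  rw [Sker_sub, Sker_sub, sub_sub_cancel]
  congr 1
  · congr 2; ring
  · ring

lemma Sker_nonneg (k l : ℝ) : 0 ≤ Sker k l := by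
  rw [Sker_eq]; positivity

lemma Sker_le (k l : ℝ) : Sker (k - l) l ≤ 2 * Real.sqrt |l| := by
  rw [Sker_sub]
  apply div_le_of_le_mul₀ (by positivity) (by positivity)
  have : Real.sqrt (|k - l| * |l| * |k|) ≤ Real.sqrt |l| * (|k| + |k - l| + |l|) := by
    apply Real.sqrt_le_iff.mpr ⟨by positivity, ?_⟩
    rw [mul_pow, Real.sq_sqrt (abs_nonneg _)]
    have := abs_nonneg l
    have := abs_nonneg k
    have := abs_nonneg (k - l)
    have : |k - l| * |k| ≤ (|k| + |k - l| + |l|) ^ 2 := by nlinarith [mul_nonneg (abs_nonneg (k-l)) (abs_nonneg k), mul_nonneg (abs_nonneg (k-l)) (abs_nonneg l),mul_nonneg (abs_nonneg k) (abs_nonneg l)]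
    nlinarith
  linarith

lemma pow_le_w {s : ℝ} (hs : 2 < s) (x : ℝ) (hx : 0 ≤ x) (n : ℕ) (hn : n ≤ 4) :
    x ^ n ≤ 1 + x ^ (2 * s) := by
  have h0 : 0 ≤ x ^ (2 * s) := Real.rpow_nonneg hx _
  rcases le_total x 1 with h | h
  · have := pow_le_one₀ (n := n) hx h
    linarith
  · have : x ^ (n : ℝ) ≤ x ^ (2 * s) := by
      apply Real.rpow_le_rpow_of_exponent_le h
      have : (n : ℝ) ≤ 4 := by exact_mod_cast hn
      linarith
    rw [Real.rpow_natCast] at this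
    linarith

section fixed
variable {s M : ℝ} {u : ℝ → ℂ}

lemma int_pow (hs : 2 < s) (hu : Measurable u)
    (hi : Integrable (fun k : ℝ => (1 + |k| ^ (2 * s)) * ‖u k‖ ^ 2))
    (hM : (∫ k : ℝ, (1 + |k| ^ (2 * s)) * ‖u k‖ ^ 2) ≤ M) (n : ℕ) (hn : n ≤ 4) :
    Integrable (fun k : ℝ => |k| ^ n * ‖u k‖ ^ 2) ∧
      (∫ k : ℝ, |k| ^ n * ‖u k‖ ^ 2) ≤ M := by
  have hle : ∀ k : ℝ, |k| ^ n * ‖u k‖ ^ 2 ≤ (1 + |k| ^ (2 * s)) * ‖u k‖ ^ 2 := fun k =>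
    mul_le_mul_of_nonneg_right (pow_le_w hs _ (abs_nonneg k) n hn) (by positivity)
  have h1 : Integrable (fun k : ℝ => |k| ^ n * ‖u k‖ ^ 2) := by
    refine hi.mono' (by fun_prop) (.of_forall fun k => ?_)
    rw [Real.norm_of_nonneg (by positivity)]
    exact hle k
  exact ⟨h1, (integral_mono h1 hi hle).trans hM⟩

lemma int_kf (hs : 2 < s) (hu : Measurable u)
    (hi : Integrable (fun k : ℝ => (1 + |k| ^ (2 * s)) * ‖u k‖ ^ 2))
    (hM : (∫ k : ℝ, (1 + |k| ^ (2 * s)) * ‖u k‖ ^ 2) ≤ M) :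
    Integrable (fun k : ℝ => |k| * ‖u k‖) ∧
      (∫ k : ℝ, |k| * ‖u k‖) ≤ M + ∫ k : ℝ, (1 + k ^ 2)⁻¹ := by
  obtain ⟨i2, m2⟩ := int_pow hs hu hi hM 2 (by norm_num)
  obtain ⟨i4, m4⟩ := int_pow hs hu hi hM 4 (by norm_num)
  have ib : Integrable (fun k : ℝ => 1/2 * (|k| ^ 2 * ‖u k‖ ^ 2 + |k| ^ 4 * ‖u k‖ ^ 2)) :=
    (i2.add i4).const_mul (1/2)
  have hle : ∀ k : ℝ, |k| * ‖u k‖ ≤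
      1/2 * (|k| ^ 2 * ‖u k‖ ^ 2 + |k| ^ 4 * ‖u k‖ ^ 2) + (1 + k ^ 2)⁻¹ := by
    intro k
    have e : |k| ^ 2 * ‖u k‖ ^ 2 + |k| ^ 4 * ‖u k‖ ^ 2 = (1 + k ^ 2) * (|k| * ‖u k‖) ^ 2 := by
      rw [← sq_abs k]; ring
    rw [e]
    have hp : 0 < 1 + k ^ 2 := by positivity
    generalize |k| * ‖u k‖ = y
    generalize 1 + k ^ 2 = p at hp
    have : 1 / 2 * (p * y ^ 2) + p⁻¹ - y = (p * y - 1) ^ 2 / (2 * p) + 1 / (2 * p) := by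
      field_simp; ring
    have : 0 ≤ (p * y - 1) ^ 2 / (2 * p) + 1 / (2 * p) := by positivity
    linarith
  have ir : Integrable fun k : ℝ =>
      1/2 * (|k| ^ 2 * ‖u k‖ ^ 2 + |k| ^ 4 * ‖u k‖ ^ 2) + (1 + k ^ 2)⁻¹ :=
    ib.add integrable_inv_one_add_sq
  have h1 : Integrable (fun k : ℝ => |k| * ‖u k‖) := by
    refine ir.mono' (by fun_prop) (.of_forall fun k => ?_)
    rw [Real.norm_of_nonneg (by positivity)]
    exact hle k
  refine ⟨h1, (integral_mono h1 ir hle).trans ?_⟩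
  rw [integral_add ib integrable_inv_one_add_sq, integral_const_mul, integral_add i2 i4]
  linarith

lemma inner_bd (hs : 2 < s) (hu : Measurable u)
    (hi : Integrable (fun k : ℝ => (1 + |k| ^ (2 * s)) * ‖u k‖ ^ 2))
    (hM : (∫ k : ℝ, (1 + |k| ^ (2 * s)) * ‖u k‖ ^ 2) ≤ M) (k : ℝ) :
    Integrable (fun l : ℝ => ((Sker (k - l) l : ℝ) : ℂ) * u (k - l) * u l) ∧
      (∫ l : ℝ, ‖((Sker (k - l) l : ℝ) : ℂ) * u (k - l) * u l‖) ≤ 2 * M := by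
  obtain ⟨i0, m0⟩ := int_pow hs hu hi hM 0 (by norm_num)
  obtain ⟨i1, m1⟩ := int_pow hs hu hi hM 1 (by norm_num)
  simp only [pow_zero, one_mul, pow_one] at i0 m0 i1 m1
  have i0' : Integrable (fun l : ℝ => ‖u (k - l)‖ ^ 2) := i0.comp_sub_left k
  have m0' : (∫ l : ℝ, ‖u (k - l)‖ ^ 2) ≤ M := by
    rw [integral_sub_left_eq_self (fun l => ‖u l‖ ^ 2) volume k]; exact m0
  have hle : ∀ l : ℝ, ‖((Sker (k - l) l : ℝ) : ℂ) * u (k - l) * u l‖ ≤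
      |l| * ‖u l‖ ^ 2 + ‖u (k - l)‖ ^ 2 := by
    intro l
    rw [norm_mul, norm_mul, Complex.norm_real, Real.norm_of_nonneg (Sker_nonneg _ _)]
    have h1 := Sker_le k l
    have h2 := Real.sq_sqrt (abs_nonneg l)
    calc Sker (k - l) l * ‖u (k - l)‖ * ‖u l‖ ≤ 2 * √|l| * ‖u (k - l)‖ * ‖u l‖ := by gcongr
      _ ≤ (√|l|) ^ 2 * ‖u l‖ ^ 2 + ‖u (k - l)‖ ^ 2 := by
        nlinarith [sq_nonneg (√|l| * ‖u l‖ - ‖u (k - l)‖)]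
      _ = _ := by rw [h2]
  have hm : Measurable (fun l : ℝ => Sker (k - l) l) :=
    Sker_meas.comp (measurable_const.prodMk measurable_id)
  have h1 : Integrable (fun l : ℝ => ((Sker (k - l) l : ℝ) : ℂ) * u (k - l) * u l) := by
    refine (i1.add i0').mono' ?_ (.of_forall hle)
    exact (((Complex.measurable_ofReal.comp hm).mul (by fun_prop)).mul hu).aestronglyMeasurable
  refine ⟨h1, (integral_mono h1.norm (i1.add i0') hle).trans ?_⟩
  simp only [Pi.add_apply]
  rw [integral_add i1 i0']; linarith

lemma triple_zero (hs : 2 < s) (hu : Measurable u)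
    (hreal : ∀ᵐ k : ℝ, u (-k) = (starRingEnd ℂ) (u k))
    (hi : Integrable (fun k : ℝ => (1 + |k| ^ (2 * s)) * ‖u k‖ ^ 2)) :
    (∫ k : ℝ, (k : ℂ) * (starRingEnd ℂ) (u k) *
      ∫ l : ℝ, ((Sker (k - l) l : ℝ) : ℂ) * u (k - l) * u l) = 0 := by
  obtain ⟨M, hM⟩ : ∃ M, (∫ k : ℝ, (1 + |k| ^ (2 * s)) * ‖u k‖ ^ 2) ≤ M := ⟨_, le_rfl⟩
  let H : ℝ × ℝ → ℂ := fun p =>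
    (starRingEnd ℂ) (u p.1) * (((Sker (p.1 - p.2) p.2 : ℝ) : ℂ) * u (p.1 - p.2) * u p.2)
  have mconj : Measurable (starRingEnd ℂ : ℂ → ℂ) := Complex.continuous_conj.measurable
  have mH : Measurable H :=
    (mconj.comp (hu.comp measurable_fst)).mul
      (((Complex.measurable_ofReal.comp Sker_meas).mul
        (hu.comp (measurable_fst.sub measurable_snd))).mul (hu.comp measurable_snd))
  let A : ℝ × ℝ → ℂ := fun p => (p.1 : ℂ) * H p
  let B : ℝ × ℝ → ℂ := fun p => (p.2 : ℂ) * H p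
  have mA : Measurable A := (Complex.measurable_ofReal.comp measurable_fst).mul mH
  have iA : Integrable A (volume.prod volume) := by
    rw [integrable_prod_iff mA.aestronglyMeasurable]
    constructor
    · refine .of_forall fun k => ?_
      exact ((inner_bd hs hu hi hM k).1.const_mul ((starRingEnd ℂ) (u k))).const_mul (k : ℂ)
    · refine ((int_kf hs hu hi hM).1.mul_const (2 * M)).mono'
        mA.norm.stronglyMeasurable.integral_prod_right'.aestronglyMeasurable
        (.of_forall fun k => ?_)
      rw [Real.norm_of_nonneg (integral_nonneg fun _ => norm_nonneg _)]
      have : (fun l => ‖A (k, l)‖) = fun l => (|k| * ‖u k‖) *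
          ‖((Sker (k - l) l : ℝ) : ℂ) * u (k - l) * u l‖ := by
        funext l
        simp only [A, H]
        rw [norm_mul, norm_mul, RCLike.norm_conj, Complex.norm_real, Real.norm_eq_abs, ← mul_assoc]
      rw [this, integral_const_mul]
      exact mul_le_mul_of_nonneg_left (inner_bd hs hu hi hM k).2 (by positivity)
  have hAB : ∀ᵐ p : ℝ × ℝ ∂(volume.prod volume), B p = (starRingEnd ℂ) (A p.swap) := by
    have q := (quasiMeasurePreserving_sub_of_right_invariant
      (volume : Measure ℝ) (volume : Measure ℝ)).ae hreal
    filter_upwards [q] with p hp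
    simp only [A, B, H, Prod.fst_swap, Prod.snd_swap, map_mul, Complex.conj_conj,
      Complex.conj_ofReal]
    rw [Sker_swap p.1 p.2, ← neg_sub p.1 p.2, hp, Complex.conj_conj]
    ring
  have iC : Integrable (fun p : ℝ × ℝ => (starRingEnd ℂ) (A p.swap)) (volume.prod volume) :=
    (Complex.conjCLE.toContinuousLinearMap).integrable_comp iA.swap
  have iB : Integrable B (volume.prod volume) := iC.congr (by
    filter_upwards [hAB] with p hp using hp.symm)
  have eB : (∫ p, B p ∂(volume.prod volume)) =
      (starRingEnd ℂ) (∫ p, A p ∂(volume.prod volume)) := by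
    rw [integral_congr_ae hAB, integral_conj, integral_prod_swap A]
  have eAB : (∫ p, A p ∂(volume.prod volume)) = 2 * ∫ p, B p ∂(volume.prod volume) := by
    rw [integral_prod A iA, integral_prod B iB, ← integral_const_mul]
    apply integral_congr_ae
    filter_upwards [iA.prod_right_ae, iB.prod_right_ae] with k hkA hkB
    have e : (∫ l, (A (k, l) - B (k, l))) = ∫ l, B (k, l) := by
      rw [← integral_sub_left_eq_self (fun l => B (k, l)) volume k]
      congr 1; funext l
      simp only [A, B, H]
      rw [Sker_refl, sub_sub_cancel]
      push_cast; ring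
    rw [integral_sub hkA hkB] at e
    linear_combination e
  have T0 : (∫ p, A p ∂(volume.prod volume)) = 0 := by
    rw [eB] at eAB
    have := congrArg norm eAB
    rw [norm_mul, RCLike.norm_conj] at this
    simp only [Complex.norm_ofNat] at this
    exact norm_eq_zero.mp (by linarith)
  rw [integral_prod A iA] at T0
  rw [← T0]
  congr 1; funext k
  rw [← integral_const_mul]
  congr 1; funext l
  simp only [A, H]; ring

end fixed

/-- Conservation of the `L²` norm for solutions (on the Fourier side) of the
noncanonical surface-wave amplitude equation, given in Duhamel form. -/
theorem L2_conservation (s : ℝ) (hs : 2 < s) (a b : ℝ) (ha : a < 0) (hb : 0 < b)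
    (f : ℝ → ℝ → ℂ)
    (hmeas : Measurable (Function.uncurry f))
    (hreal : ∀ τ ∈ Set.Ioo a b, ∀ᵐ k : ℝ, f τ (-k) = (starRingEnd ℂ) (f τ k))
    (hintg : ∀ τ ∈ Set.Ioo a b,
      Integrable (fun k : ℝ => (1 + |k| ^ (2 * s)) * ‖f τ k‖ ^ 2))
    (hbdd : ∃ M : ℝ, ∀ τ ∈ Set.Ioo a b,
      (∫ k : ℝ, (1 + |k| ^ (2 * s)) * ‖f τ k‖ ^ 2) ≤ M)
    (hcont : ∀ τ₀ ∈ Set.Ioo a b, Filter.Tendsto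
      (fun τ : ℝ => ∫ k : ℝ, (1 + |k| ^ (2 * s)) * ‖f τ k - f τ₀ k‖ ^ 2)
      (nhdsWithin τ₀ (Set.Ioo a b)) (nhds 0))
    (hduh : ∀ᵐ k : ℝ, ∀ τ ∈ Set.Ioo a b,
      f τ k = f 0 k - Complex.I * ((k : ℝ) : ℂ) *
        ∫ σ in (0 : ℝ)..τ, ∫ l : ℝ,
          ((Sker (k - l) l : ℝ) : ℂ) * f σ (k - l) * f σ l) :
    ∀ τ ∈ Set.Ioo a b, (∫ k : ℝ, ‖f τ k‖ ^ 2) = ∫ k : ℝ, ‖f 0 k‖ ^ 2 := by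
  intro τ hτ
  obtain ⟨M, hM⟩ := hbdd
  let N : ℝ → ℝ → ℂ := fun σ k => ∫ l : ℝ, ((Sker (k - l) l : ℝ) : ℂ) * f σ (k - l) * f σ l
  have h0 : (0:ℝ) ∈ Set.Ioo a b := ⟨ha, hb⟩
  have hsub : Set.uIcc 0 τ ⊆ Set.Ioo a b := by
    have := (Set.ordConnected_Ioo (a := a) (b := b)).uIcc_subset h0 hτ
    exact this
  have hu : ∀ σ, Measurable (f σ) := fun σ => hmeas.comp (measurable_const.prodMk measurable_id)
  have mN : Measurable (Function.uncurry N) := by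
    have m3 : Measurable (fun q : (ℝ × ℝ) × ℝ =>
        ((Sker (q.1.2 - q.2) q.2 : ℝ) : ℂ) * f q.1.1 (q.1.2 - q.2) * f q.1.1 q.2) := by
      refine ((Complex.measurable_ofReal.comp (Sker_meas.comp
        ((measurable_snd.comp measurable_fst).prodMk measurable_snd))).mul
        (hmeas.comp (g := Function.uncurry f) (f := fun q : (ℝ × ℝ) × ℝ => (q.1.1, q.1.2 - q.2)) (by fun_prop))).mul
        (hmeas.comp (g := Function.uncurry f) (f := fun q : (ℝ × ℝ) × ℝ => (q.1.1, q.2)) (by fun_prop))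
    exact m3.stronglyMeasurable.integral_prod_right'.measurable
  have bN : ∀ σ ∈ Set.Ioo a b, ∀ k, ‖N σ k‖ ≤ 2 * M := fun σ hσ k =>
    (norm_integral_le_integral_norm _).trans
      (inner_bd hs (hu σ) (hintg σ hσ) (hM σ hσ) k).2
  have mconj : Measurable (starRingEnd ℂ : ℂ → ℂ) := Complex.continuous_conj.measurable
  let G : ℝ → ℝ → ℂ := fun σ k => (starRingEnd ℂ) (f σ k) * (-Complex.I * (k : ℂ) * N σ k)
  have mG : Measurable (Function.uncurry G) :=
    (mconj.comp hmeas).mul ((measurable_const.mul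
      (Complex.measurable_ofReal.comp measurable_snd)).mul mN)
  have nG : ∀ σ ∈ Set.Ioo a b, ∀ k, ‖G σ k‖ ≤ |k| * ‖f σ k‖ * (2 * M) := by
    intro σ hσ k
    simp only [G]
    rw [norm_mul, norm_mul, norm_mul, RCLike.norm_conj, norm_neg, Complex.norm_I, one_mul,
      Complex.norm_real, Real.norm_eq_abs, ← mul_assoc, mul_comm ‖f σ k‖]
    exact mul_le_mul_of_nonneg_left (bN σ hσ k) (by positivity)
  have iGs : ∀ σ ∈ Set.Ioo a b, Integrable (G σ) := fun σ hσ =>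
    ((int_kf hs (hu σ) (hintg σ hσ) (hM σ hσ)).1.mul_const (2 * M)).mono'
      (mG.comp (measurable_const.prodMk measurable_id)).aestronglyMeasurable
      (.of_forall (nG σ hσ))
  have M0 : 0 ≤ 2 * M := (norm_nonneg _).trans (bN 0 h0 0)
  have zG : ∀ σ ∈ Set.Ioo a b, (∫ k, G σ k) = 0 := by
    intro σ hσ
    have := triple_zero hs (hu σ) (hreal σ hσ) (hintg σ hσ)
    have e : (fun k => G σ k) = fun k : ℝ => -Complex.I * ((k : ℂ) * (starRingEnd ℂ) (f σ k) *
      ∫ l : ℝ, ((Sker (k - l) l : ℝ) : ℂ) * f σ (k - l) * f σ l) := by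
      funext k; simp only [G, N]; ring
    rw [e, integral_const_mul, this, mul_zero]
  have hsub' : Set.uIoc 0 τ ⊆ Set.Ioo a b := Set.uIoc_subset_uIcc.trans hsub
  have iG : Integrable (Function.uncurry G) ((volume.restrict (Set.uIoc 0 τ)).prod volume) := by
    rw [integrable_prod_iff mG.aestronglyMeasurable]
    constructor
    · rw [ae_restrict_iff' measurableSet_uIoc]
      exact .of_forall fun σ hσ => iGs σ (hsub' hσ)
    · have fin : IsFiniteMeasure (volume.restrict (Set.uIoc (0:ℝ) τ)) :=
        ⟨by simp [Set.uIoc, Real.volume_Ioc]⟩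
      refine (integrable_const ((M + ∫ k : ℝ, (1 + k ^ 2)⁻¹) * (2 * M))).mono'
        mG.norm.stronglyMeasurable.integral_prod_right'.aestronglyMeasurable ?_
      rw [ae_restrict_iff' measurableSet_uIoc]
      refine .of_forall fun σ hσ' => ?_
      have hσ := hsub' hσ'
      obtain ⟨ik, mk⟩ := int_kf hs (hu σ) (hintg σ hσ) (hM σ hσ)
      rw [Real.norm_of_nonneg (integral_nonneg fun _ => norm_nonneg _)]
      refine (integral_mono (iGs σ hσ).norm (ik.mul_const (2 * M)) (nG σ hσ)).trans ?_
      rw [integral_mul_const]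
      exact mul_le_mul_of_nonneg_right mk M0
  -- pointwise identity
  have pt : ∀ᵐ k : ℝ, ‖f τ k‖ ^ 2 - ‖f 0 k‖ ^ 2 = ∫ σ in (0:ℝ)..τ, 2 * (G σ k).re := by
    filter_upwards [hduh] with k hk
    let h : ℝ → ℂ := fun σ => -Complex.I * (k : ℂ) * N σ k
    have hN : IntervalIntegrable (fun σ => N σ k) volume 0 τ := by
      rw [intervalIntegrable_iff]
      refine Measure.integrableOn_of_bounded (M := 2 * M) (by simp [Set.uIoc, Real.volume_Ioc])
        (mN.comp (measurable_id.prodMk measurable_const)).aestronglyMeasurable ?_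
      rw [ae_restrict_iff' measurableSet_uIoc]
      exact .of_forall fun σ hσ => bN σ (hsub' hσ) k
    have hh : IntervalIntegrable h volume 0 τ := hN.const_mul _
    have eq : ∀ σ ∈ Set.Ioo a b, f σ k = f 0 k + ∫ t in (0:ℝ)..σ, h t := by
      intro σ hσ
      rw [hk σ hσ, intervalIntegral.integral_const_mul]
      ring
    have key := sq_complex (c := f 0 k) hh
    rw [← eq τ hτ] at key
    rw [← key]
    apply intervalIntegral.integral_congr
    intro σ hσ
    simp only []
    rw [← eq σ (hsub hσ)]
  have i2 : ∀ σ ∈ Set.Ioo a b, Integrable (fun k => ‖f σ k‖ ^ 2) := fun σ hσ => by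
    simpa using (int_pow hs (hu σ) (hintg σ hσ) (hM σ hσ) 0 (by norm_num)).1
  rw [← sub_eq_zero, ← integral_sub (i2 τ hτ) (i2 0 h0), integral_congr_ae pt]
  have iR : Integrable (fun p : ℝ × ℝ => 2 * (Function.uncurry G p).re)
      ((volume.restrict (Set.uIoc 0 τ)).prod volume) := iG.re.const_mul 2
  have sw := integral_integral_swap (f := fun σ k => 2 * (G σ k).re) iR
  have z : (∫ σ in Set.uIoc 0 τ, ∫ k, 2 * (G σ k).re) = 0 := by
    rw [setIntegral_congr_fun (g := fun _ => (0:ℝ)) measurableSet_uIoc]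
    · simp
    · intro σ hσ
      simp only []
      rw [integral_const_mul]
      have : (∫ k, (G σ k).re) = (∫ k, G σ k).re := integral_re (iGs σ (hsub' hσ))
      rw [this, zG σ (hsub' hσ)]; simp
  simp only [intervalIntegral.intervalIntegral_eq_integral_uIoc]
  rw [integral_smul, ← sw, z, smul_zero]
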